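/- Let d ∈ ℕ with d ≥ 1, let 𝒟 be a set of datasets equipped with an adjacency relation ∼, and let f : 𝒟 → (Fin d → ℝ) be a query function whose ℓ₂ global sensitivity is bounded by Δ > 0, i.e., for all D ∼ D', (∑_{i} (f(D)_i − f(D')_i)²)^{1/2} ≤ Δ. Let ε, δ ∈ (0, 1) and set σ = Δ·√(2·log(1.25/δ))/ε. Define the mechanism M(D) to be the probability measure on ℝ^d given by independent Gaussian coordinates, M(D) = ⨂_{i ∈ Fin d} N(f(D)_i, σ²) (i.e., the law of f(D) + η with η ~ N(0, σ²·I_{d×d})). Then M satisfies (ε, δ)-differential privacy: for all D ∼ D' and every measurable E ⊆ ℝ^d, M(D)(E) ≤ e^ε · M(D')(E) + δ. -/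

import Mathlib

open MeasureTheory ProbabilityTheory

/-! The privacy loss `log (dμ/dν)` between `μ = N(a, v)` and `ν = N(b, v)` is affine in the sample,
so under `μ` it is Gaussian; its law is `N(k / 2, k)` with `k = (a - b)² / v`. Losses add over
independent coordinates, so the loss between two product Gaussians is again `N(k / 2, k)`, now with
`k = ∑ (aᵢ - bᵢ)² / vᵢ`. Two measures are `(ε, δ)`-close as soon as the loss exceeds `ε` with
probability at most `δ`, which leaves a one-dimensional Gaussian tail estimate. -/

open scoped NNReal ENNReal

section Indistinguishability

variable {Ω 𝒟 : Type*} [MeasurableSpace Ω]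

/-- One-sided `(ε, δ)`-indistinguishability of two measures, the relation that differential privacy
demands between the outputs on adjacent datasets. Symmetry is left to the adjacency relation. -/
def ApproxIndistinguishable (ε δ : ℝ) (μ ν : Measure Ω) : Prop :=
  ∀ E, MeasurableSet E → μ E ≤ ENNReal.ofReal (Real.exp ε) * ν E + ENNReal.ofReal δ

/-- `(ε, δ)`-differential privacy of the randomized mechanism `M` with respect to the adjacency
relation `Adj`; a mechanism is encoded by the law of its output on each dataset. -/
def IsDifferentiallyPrivate (Adj : 𝒟 → 𝒟 → Prop) (M : 𝒟 → Measure Ω) (ε δ : ℝ) : Prop :=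
  ∀ D D', Adj D D' → ApproxIndistinguishable ε δ (M D) (M D')

theorem measure_le_exp_mul_of_llr_le {μ ν : Measure Ω} [SigmaFinite μ] [SigmaFinite ν]
    (hμν : μ ≪ ν) {ε : ℝ} {s : Set Ω} (hle : ∀ x ∈ s, llr μ ν x ≤ ε) :
    μ s ≤ ENNReal.ofReal (Real.exp ε) * ν s := by
  rw [← Measure.setLIntegral_rnDeriv hμν, ← setLIntegral_const]
  refine setLIntegral_mono_ae measurable_const.aemeasurable ?_
  filter_upwards [μ.rnDeriv_ne_top ν] with x hx hxs
  exact (ENNReal.le_ofReal_iff_toReal_le hx (Real.exp_pos ε).le).2 <|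
    (Real.le_exp_log _).trans (Real.exp_le_exp.2 (hle x hxs))

theorem approxIndistinguishable_of_measure_lt_llr_le {μ ν : Measure Ω} [SigmaFinite μ]
    [SigmaFinite ν] (hμν : μ ≪ ν) {ε δ : ℝ} (htail : μ {x | ε < llr μ ν x} ≤ ENNReal.ofReal δ) :
    ApproxIndistinguishable ε δ μ ν := by
  intro E _
  calc μ E ≤ μ (E ∩ {x | ε < llr μ ν x}) + μ (E \ {x | ε < llr μ ν x}) :=
        measure_le_inter_add_sdiff _ _ _
    _ ≤ ENNReal.ofReal δ + ENNReal.ofReal (Real.exp ε) * ν (E \ {x | ε < llr μ ν x}) :=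
        add_le_add ((measure_mono Set.inter_subset_right).trans htail)
          (measure_le_exp_mul_of_llr_le hμν fun _ hx => not_lt.1 hx.2)
    _ ≤ ENNReal.ofReal (Real.exp ε) * ν E + ENNReal.ofReal δ := by
        rw [add_comm]
        gcongr
        exact Set.sdiff_subset

end Indistinguishability

section ProductMeasures

variable {ι : Type*} [Fintype ι] {X : ι → Type*} [∀ i, MeasurableSpace (X i)]

theorem lintegral_pi_prod_eq_prod (μ : ∀ i, Measure (X i)) [∀ i, IsProbabilityMeasure (μ i)]
    {g : ∀ i, X i → ℝ≥0∞} (hg : ∀ i, Measurable (g i)) :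
    ∫⁻ x, ∏ i, g i (x i) ∂Measure.pi μ = ∏ i, ∫⁻ x, g i x ∂μ i := by
  rw [lintegral_prod_eq_prod_lintegral_of_indepFun Finset.univ _
    (iIndepFun_pi fun i => (hg i).aemeasurable) fun i => (hg i).comp (measurable_pi_apply i)]
  exact Finset.prod_congr rfl fun i _ => (measurePreserving_eval μ i).lintegral_comp (hg i)

theorem pi_withDensity (μ : ∀ i, Measure (X i)) [∀ i, IsProbabilityMeasure (μ i)]
    {g : ∀ i, X i → ℝ≥0∞} (hg : ∀ i, Measurable (g i))
    [∀ i, SigmaFinite ((μ i).withDensity (g i))] :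
    Measure.pi (fun i => (μ i).withDensity (g i)) =
      (Measure.pi μ).withDensity (fun x => ∏ i, g i (x i)) := by
  refine Measure.pi_eq fun s hs => ?_
  have hprod (x : ∀ i, X i) : (Set.univ.pi s).indicator (fun x => ∏ i, g i (x i)) x =
      ∏ i, (s i).indicator (g i) (x i) := by
    by_cases hx : x ∈ Set.univ.pi s
    · rw [Set.indicator_of_mem hx]
      exact Finset.prod_congr rfl fun i _ => (Set.indicator_of_mem (hx i trivial) _).symm
    · rw [Set.indicator_of_notMem hx]
      obtain ⟨i, hi⟩ : ∃ i, x i ∉ s i := by simpa [Set.mem_pi] using hx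
      exact (Finset.prod_eq_zero (Finset.mem_univ i) (Set.indicator_of_notMem hi _)).symm
  rw [withDensity_apply _ (.univ_pi hs), ← lintegral_indicator (.univ_pi hs),
    lintegral_congr hprod, lintegral_pi_prod_eq_prod μ fun i => (hg i).indicator (hs i)]
  exact Finset.prod_congr rfl fun i _ => by
    rw [withDensity_apply _ (hs i), ← lintegral_indicator (hs i)]

variable {μ ν : ∀ i, Measure (X i)} [∀ i, IsProbabilityMeasure (μ i)]
  [∀ i, IsProbabilityMeasure (ν i)]

theorem pi_eq_withDensity_prod_rnDeriv (hμν : ∀ i, μ i ≪ ν i) :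
    Measure.pi μ =
      (Measure.pi ν).withDensity (fun x => ∏ i, (μ i).rnDeriv (ν i) (x i)) := by
  rw [← pi_withDensity ν fun i => Measure.measurable_rnDeriv (μ i) (ν i)]
  exact congrArg Measure.pi (funext fun i => (Measure.withDensity_rnDeriv_eq _ _ (hμν i)).symm)

theorem pi_absolutelyContinuous (hμν : ∀ i, μ i ≪ ν i) : Measure.pi μ ≪ Measure.pi ν := by
  rw [pi_eq_withDensity_prod_rnDeriv hμν]
  exact withDensity_absolutelyContinuous _ _

theorem llr_pi (hμν : ∀ i, μ i ≪ ν i) :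
    llr (Measure.pi μ) (Measure.pi ν) =ᵐ[Measure.pi μ]
      fun x => ∑ i, llr (μ i) (ν i) (x i) := by
  have hrnDeriv : (Measure.pi μ).rnDeriv (Measure.pi ν) =ᵐ[Measure.pi μ]
      fun x => ∏ i, (μ i).rnDeriv (ν i) (x i) := by
    refine (pi_absolutelyContinuous hμν).ae_eq ?_
    conv_lhs => rw [pi_eq_withDensity_prod_rnDeriv hμν]
    exact Measure.rnDeriv_withDensity _ <| Finset.measurable_prod _ fun i _ =>
      (Measure.measurable_rnDeriv (μ i) (ν i)).comp (measurable_pi_apply i)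
  have hfactor : ∀ᵐ x ∂Measure.pi μ, ∀ i, ((μ i).rnDeriv (ν i) (x i)).toReal ≠ 0 :=
    ae_all_iff.2 fun i => Measure.tendsto_eval_ae_ae.eventually <| by
      filter_upwards [Measure.rnDeriv_pos (hμν i),
        (hμν i).ae_le ((μ i).rnDeriv_ne_top (ν i))] with x hpos htop
      exact (ENNReal.toReal_pos hpos.ne' htop).ne'
  filter_upwards [hrnDeriv, hfactor] with x hx hx0
  rw [llr_def]
  simp only [hx, ENNReal.toReal_prod]
  exact Real.log_prod fun i _ => hx0 i

end ProductMeasures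

section GaussianPrivacyLoss

theorem gaussianReal_eq_withDensity_gaussianReal (a b : ℝ) {v : ℝ≥0} (hv : v ≠ 0) :
    gaussianReal a v = (gaussianReal b v).withDensity
      (fun x => ENNReal.ofReal (Real.exp (((x - b) ^ 2 - (x - a) ^ 2) / (2 * v)))) := by
  rw [gaussianReal_of_var_ne_zero a hv, gaussianReal_of_var_ne_zero b hv,
    ← withDensity_mul _ (measurable_gaussianPDF b v) (by fun_prop)]
  congr 1 with x
  rw [Pi.mul_apply, gaussianPDF, gaussianPDF, ← ENNReal.ofReal_mul (gaussianPDFReal_nonneg _ _ _),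
    gaussianPDFReal, gaussianPDFReal, mul_assoc (√_)⁻¹, ← Real.exp_add]
  congr 3
  ring

theorem gaussianReal_absolutelyContinuous_gaussianReal (a b : ℝ) {v : ℝ≥0} (hv : v ≠ 0) :
    gaussianReal a v ≪ gaussianReal b v :=
  (gaussianReal_absolutelyContinuous a hv).trans (gaussianReal_absolutelyContinuous' b hv)

theorem llr_gaussianReal (a b : ℝ) {v : ℝ≥0} (hv : v ≠ 0) :
    llr (gaussianReal a v) (gaussianReal b v) =ᵐ[gaussianReal a v]
      fun x => ((x - b) ^ 2 - (x - a) ^ 2) / (2 * v) := by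
  have hrnDeriv : (gaussianReal a v).rnDeriv (gaussianReal b v) =ᵐ[gaussianReal b v]
      fun x => ENNReal.ofReal (Real.exp (((x - b) ^ 2 - (x - a) ^ 2) / (2 * v))) := by
    conv_lhs => rw [gaussianReal_eq_withDensity_gaussianReal a b hv]
    exact Measure.rnDeriv_withDensity _ (by fun_prop)
  filter_upwards [(gaussianReal_absolutelyContinuous_gaussianReal a b hv).ae_eq hrnDeriv] with x hx
  rw [llr_def]
  simp only [hx, ENNReal.toReal_ofReal (Real.exp_pos _).le, Real.log_exp]

theorem gaussianReal_map_affine (m c y : ℝ) (v : ℝ≥0) :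
    (gaussianReal m v).map (fun x => c * x + y) =
      gaussianReal (c * m + y) (‖c‖₊ ^ 2 * v) := by
  have hcomp : (fun x => c * x + y) = (fun x => x + y) ∘ (fun x => c * x) := rfl
  rw [hcomp, ← Measure.map_map (by fun_prop) (by fun_prop), gaussianReal_map_const_mul,
    gaussianReal_map_add_const]
  congr 2
  ext
  simp

theorem map_llr_gaussianReal (a b : ℝ) {v : ℝ≥0} (hv : v ≠ 0) :
    (gaussianReal a v).map (llr (gaussianReal a v) (gaussianReal b v)) =
      gaussianReal ((‖a - b‖₊ ^ 2 / v : ℝ≥0) / 2) (‖a - b‖₊ ^ 2 / v) := by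
  have hv' : (v : ℝ) ≠ 0 := NNReal.coe_ne_zero.2 hv
  have haffine (x : ℝ) : ((x - b) ^ 2 - (x - a) ^ 2) / (2 * v) =
      (a - b) / v * x + (b ^ 2 - a ^ 2) / (2 * v) := by
    field_simp
    ring
  rw [Measure.map_congr (llr_gaussianReal a b hv), funext haffine, gaussianReal_map_affine]
  congr 1
  · push_cast
    rw [Real.norm_eq_abs, sq_abs]
    field_simp
    ring
  · ext
    simp only [NNReal.coe_mul, NNReal.coe_pow, NNReal.coe_div, coe_nnnorm, norm_div, div_pow,
      Real.norm_eq_abs, sq_abs]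
    field_simp

variable {ι : Type*} [Fintype ι]

theorem map_sum_pi_gaussianReal (m : ι → ℝ) (v : ι → ℝ≥0) :
    (Measure.pi fun i => gaussianReal (m i) (v i)).map (fun x => ∑ i, x i) =
      gaussianReal (∑ i, m i) (∑ i, v i) := by
  refine Measure.ext_of_charFun (funext fun t => ?_)
  rw [charFun_map_sum_pi_eq_prod]
  simp only [Finset.prod_apply, charFun_gaussianReal, ← Complex.exp_sum]
  congr 1
  push_cast
  rw [Finset.sum_sub_distrib, Finset.mul_sum, Finset.sum_mul, Finset.sum_mul, Finset.sum_div]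

theorem map_llr_pi_gaussianReal (a b : ι → ℝ) {v : ι → ℝ≥0} (hv : ∀ i, v i ≠ 0) :
    (Measure.pi fun i => gaussianReal (a i) (v i)).map
        (llr (Measure.pi fun i => gaussianReal (a i) (v i))
          (Measure.pi fun i => gaussianReal (b i) (v i))) =
      gaussianReal ((∑ i, ‖a i - b i‖₊ ^ 2 / v i : ℝ≥0) / 2) (∑ i, ‖a i - b i‖₊ ^ 2 / v i) := by
  let loss (i : ι) : ℝ → ℝ := llr (gaussianReal (a i) (v i)) (gaussianReal (b i) (v i))
  have hloss (i : ι) : Measurable (loss i) := measurable_llr _ _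
  have hcomp : (fun x : ι → ℝ => ∑ i, loss i (x i)) =
      (fun y => ∑ i, y i) ∘ (fun x i => loss i (x i)) := rfl
  have hlaw (i : ι) := map_llr_gaussianReal (a i) (b i) (hv i)
  rw [Measure.map_congr (llr_pi fun i =>
      gaussianReal_absolutelyContinuous_gaussianReal (a i) (b i) (hv i)), hcomp,
    ← Measure.map_map (by fun_prop) (by fun_prop),
    Measure.pi_map_pi fun i => (hloss i).aemeasurable]
  simp only [loss, hlaw, map_sum_pi_gaussianReal, NNReal.coe_sum, Finset.sum_div]

end GaussianPrivacyLoss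

section GaussianTail

theorem gaussianReal_Ioi_self_le (m : ℝ) (v : ℝ≥0) : gaussianReal m v (Set.Ioi m) ≤ 2⁻¹ := by
  have hreflect : gaussianReal m v (Set.Iio m) = gaussianReal m v (Set.Ioi m) := by
    have hmap : (gaussianReal m v).map (fun x => 2 * m - x) = gaussianReal m v := by
      rw [gaussianReal_map_const_sub, two_mul, add_sub_cancel_right]
    conv_lhs => rw [← hmap]
    rw [Measure.map_apply (by fun_prop) measurableSet_Iio]
    congr 1 with x
    simp only [Set.mem_preimage, Set.mem_Iio, Set.mem_Ioi]
    constructor <;> intro h <;> linarith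
  have hle : gaussianReal m v (Set.Ioi m) * 2 ≤ 1 :=
    calc gaussianReal m v (Set.Ioi m) * 2
        = gaussianReal m v (Set.Iio m) + gaussianReal m v (Set.Ioi m) := by
          rw [hreflect, mul_two]
      _ = gaussianReal m v (Set.Iio m ∪ Set.Ioi m) :=
          (measure_union Set.Iio_disjoint_Ioi_same measurableSet_Ioi).symm
      _ ≤ 1 := prob_le_one
  simpa using ENNReal.le_div_iff_mul_le (by simp) (by simp) |>.2 hle

-- On `(0, ∞)` the density of `N(-t, v)` relative to `N(0, v)` is at most `exp (-t² / (2v))`.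
theorem gaussianReal_Ioi_le_of_nonneg {v : ℝ≥0} (hv : v ≠ 0) {t : ℝ} (ht : 0 ≤ t) :
    gaussianReal 0 v (Set.Ioi t) ≤ ENNReal.ofReal (Real.exp (-t ^ 2 / (2 * v)) / 2) := by
  have hshift : gaussianReal 0 v (Set.Ioi t) = gaussianReal (-t) v (Set.Ioi 0) := by
    rw [← zero_sub t, ← gaussianReal_map_sub_const,
      Measure.map_apply (by fun_prop) measurableSet_Ioi]
    congr 1 with x
    simp
  calc gaussianReal 0 v (Set.Ioi t)
      = ∫⁻ x in Set.Ioi 0, ENNReal.ofReal (Real.exp (((x - 0) ^ 2 - (x - -t) ^ 2) / (2 * v)))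
          ∂gaussianReal 0 v := by
        rw [hshift, gaussianReal_eq_withDensity_gaussianReal (-t) 0 hv,
          withDensity_apply _ measurableSet_Ioi]
    _ ≤ ∫⁻ _ in Set.Ioi 0, ENNReal.ofReal (Real.exp (-t ^ 2 / (2 * v))) ∂gaussianReal 0 v := by
        refine setLIntegral_mono measurable_const fun x hx => ?_
        gcongr
        have : 0 ≤ x * t := mul_nonneg (le_of_lt hx) ht
        linarith
    _ ≤ ENNReal.ofReal (Real.exp (-t ^ 2 / (2 * v))) * 2⁻¹ := by
        rw [setLIntegral_const]
        gcongr
        exact gaussianReal_Ioi_self_le 0 v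
    _ = ENNReal.ofReal (Real.exp (-t ^ 2 / (2 * v)) / 2) := by
        rw [ENNReal.ofReal_div_of_pos two_pos, ENNReal.ofReal_ofNat,
          ENNReal.div_eq_inv_mul, mul_comm]

theorem gaussianReal_le_mul_volume (m : ℝ) {v : ℝ≥0} (hv : v ≠ 0) (s : Set ℝ) :
    gaussianReal m v s ≤ ENNReal.ofReal (√(2 * Real.pi * v))⁻¹ * volume s := by
  rw [gaussianReal_apply _ hv, ← setLIntegral_const]
  refine lintegral_mono fun x => ENNReal.ofReal_le_ofReal ?_
  rw [gaussianPDFReal]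
  refine mul_le_of_le_one_right (by positivity) (Real.exp_le_one_iff.2 ?_)
  exact div_nonpos_of_nonpos_of_nonneg (neg_nonpos.2 (sq_nonneg _)) (by positivity)

theorem gaussianReal_zero_one_Ioi_le_of_nonpos {t : ℝ} (ht : t ≤ 0) :
    gaussianReal 0 1 (Set.Ioi t) ≤ ENNReal.ofReal (1 / 2 - 2 / 5 * t) := by
  have hdensity : (√(2 * Real.pi * (1 : ℝ≥0)))⁻¹ ≤ 2 / 5 := by
    rw [← inv_div]
    gcongr
    refine Real.le_sqrt_of_sq_le ?_
    rw [NNReal.coe_one]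
    linarith [Real.pi_gt_d2]
  calc gaussianReal 0 1 (Set.Ioi t)
      ≤ gaussianReal 0 1 (Set.Ioi 0) + gaussianReal 0 1 (Set.Ioc t 0) := by
        rw [← Set.Ioc_union_Ioi_eq_Ioi ht, add_comm]
        exact measure_union_le _ _
    _ ≤ 2⁻¹ + ENNReal.ofReal (2 / 5) * volume (Set.Ioc t 0) := by
        gcongr
        · exact gaussianReal_Ioi_self_le 0 1
        · exact (gaussianReal_le_mul_volume 0 one_ne_zero _).trans (by gcongr)
    _ = ENNReal.ofReal (1 / 2 - 2 / 5 * t) := by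
        have hhalf : (2⁻¹ : ℝ≥0∞) = ENNReal.ofReal (1 / 2) := by
          rw [one_div, ENNReal.ofReal_inv_of_pos two_pos, ENNReal.ofReal_ofNat]
        rw [Real.volume_Ioc, ← ENNReal.ofReal_mul (by norm_num), hhalf,
          ← ENNReal.ofReal_add (by norm_num) (by linarith)]
        congr 1
        ring

theorem exp_three_fourths_le : Real.exp (3 / 4) ≤ 5 / 2 := by
  have hlog : 1 / 5 ≤ Real.log (5 / 4) := by
    linarith [Real.one_sub_inv_le_log_of_pos (show (0 : ℝ) < 5 / 4 by norm_num)]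
  rw [← Real.le_log_iff_exp_le (by norm_num), show (5 / 2 : ℝ) = 2 * (5 / 4) by norm_num,
    Real.log_mul (by norm_num) (by norm_num)]
  linarith [Real.log_two_gt_d9]

-- The right-hand side is `δ` when `c = √(2 log (1.25 / δ))`.
theorem gaussianReal_zero_one_Ioi_sub_div_le {c ε : ℝ} (hc : 3 / 5 ≤ c) (hε : ε ≤ 3 / 2) :
    gaussianReal 0 1 (Set.Ioi (c - ε / (2 * c))) ≤
      ENNReal.ofReal (5 / 4 * Real.exp (-c ^ 2 / 2)) := by
  have hcpos : 0 < c := by linarith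
  rcases le_total 0 (c - ε / (2 * c)) with ht | ht
  · refine (gaussianReal_Ioi_le_of_nonneg one_ne_zero ht).trans (ENNReal.ofReal_le_ofReal ?_)
    have hsq : c ^ 2 - ε ≤ (c - ε / (2 * c)) ^ 2 := by
      have hexpand : (c - ε / (2 * c)) ^ 2 = c ^ 2 - ε + (ε / (2 * c)) ^ 2 := by
        field_simp
        ring
      rw [hexpand]
      exact le_add_of_nonneg_right (sq_nonneg _)
    calc Real.exp (-(c - ε / (2 * c)) ^ 2 / (2 * (1 : ℝ≥0))) / 2
        ≤ Real.exp (3 / 4 + -c ^ 2 / 2) / 2 := by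
          rw [NNReal.coe_one]
          gcongr
          linarith
      _ ≤ 5 / 2 * Real.exp (-c ^ 2 / 2) / 2 := by
          rw [Real.exp_add]
          gcongr
          exact exp_three_fourths_le
      _ = 5 / 4 * Real.exp (-c ^ 2 / 2) := by ring
  · refine (gaussianReal_zero_one_Ioi_le_of_nonpos ht).trans (ENNReal.ofReal_le_ofReal ?_)
    have hsq : c ^ 2 ≤ 3 / 4 := by
      have : c * (2 * c) ≤ ε := (le_div_iff₀ (by positivity)).1 (sub_nonpos.1 ht)
      linarith
    have hquot : ε / (2 * c) ≤ 5 / 4 := by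
      rw [div_le_iff₀ (by positivity)]
      linarith
    linarith [Real.add_one_le_exp (-c ^ 2 / 2)]

theorem gaussianReal_half_var_Ioi_le {c ε : ℝ} (hc : 0 < c) {k : ℝ≥0} (hk : c * √k ≤ ε) :
    gaussianReal (k / 2) k (Set.Ioi ε) ≤ gaussianReal 0 1 (Set.Ioi (c - ε / (2 * c))) := by
  have hstandard : (gaussianReal 0 1).map (fun x => √k * x + k / 2) = gaussianReal (k / 2) k := by
    rw [gaussianReal_map_affine]
    congr 1
    · ring
    · ext
      simp
  rw [← hstandard, Measure.map_apply (by fun_prop) measurableSet_Ioi]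
  refine measure_mono fun x hx => ?_
  by_contra hxle
  have hhalf : √k / 2 ≤ ε / (2 * c) := by
    rw [le_div_iff₀ (by positivity)]
    linarith
  have hloss : √k * x + k / 2 ≤ ε :=
    calc √k * x + k / 2 = √k * (x + √k / 2) := by
          rw [mul_add, ← mul_div_assoc, Real.mul_self_sqrt k.coe_nonneg]
      _ ≤ √k * c := by
          gcongr
          linarith [Set.notMem_Ioi.1 hxle]
      _ ≤ ε := by rwa [mul_comm]
  exact hloss.not_gt hx

end GaussianTail

section GaussianMechanism

variable {𝒟 ι : Type*} [Fintype ι]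

theorem approxIndistinguishable_pi_gaussianReal (a b : ι → ℝ) {v : ι → ℝ≥0} (hv : ∀ i, v i ≠ 0)
    {c ε : ℝ} (hc : 3 / 5 ≤ c) (hε : ε ≤ 3 / 2)
    (hcε : c * √(∑ i, (a i - b i) ^ 2 / v i) ≤ ε) :
    ApproxIndistinguishable ε (5 / 4 * Real.exp (-c ^ 2 / 2))
      (Measure.pi fun i => gaussianReal (a i) (v i))
      (Measure.pi fun i => gaussianReal (b i) (v i)) := by
  refine approxIndistinguishable_of_measure_lt_llr_le (pi_absolutelyContinuous fun i =>
    gaussianReal_absolutelyContinuous_gaussianReal (a i) (b i) (hv i)) ?_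
  have hk : ((∑ i, ‖a i - b i‖₊ ^ 2 / v i : ℝ≥0) : ℝ) = ∑ i, (a i - b i) ^ 2 / v i := by
    push_cast
    simp only [Real.norm_eq_abs, sq_abs]
  rw [← hk] at hcε
  calc _ = gaussianReal ((∑ i, ‖a i - b i‖₊ ^ 2 / v i : ℝ≥0) / 2) (∑ i, ‖a i - b i‖₊ ^ 2 / v i)
          (Set.Ioi ε) := by
        rw [← map_llr_pi_gaussianReal a b hv, Measure.map_apply (measurable_llr _ _)
          measurableSet_Ioi]
        rfl
    _ ≤ gaussianReal 0 1 (Set.Ioi (c - ε / (2 * c))) :=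
        gaussianReal_half_var_Ioi_le (by linarith) hcε
    _ ≤ ENNReal.ofReal (5 / 4 * Real.exp (-c ^ 2 / 2)) := gaussianReal_zero_one_Ioi_sub_div_le hc hε

theorem one_fifth_le_log_div {δ : ℝ} (hδ : δ ∈ Set.Ioc (0 : ℝ) 1) :
    1 / 5 ≤ Real.log (1.25 / δ) := by
  obtain ⟨hδ0, hδ1⟩ := hδ
  have hlog := Real.one_sub_inv_le_log_of_pos (show (0 : ℝ) < 1.25 / δ by positivity)
  have hinv : (1.25 / δ)⁻¹ ≤ 4 / 5 := by
    rw [inv_div, div_le_iff₀ (by norm_num)]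
    linarith
  linarith

theorem three_fifths_le_sqrt_two_mul_log_div {δ : ℝ} (hδ : δ ∈ Set.Ioc (0 : ℝ) 1) :
    3 / 5 ≤ √(2 * Real.log (1.25 / δ)) :=
  Real.le_sqrt_of_sq_le (by linarith [one_fifth_le_log_div hδ])

theorem five_fourths_mul_exp_neg_sq_sqrt_two_mul_log_div {δ : ℝ} (hδ : δ ∈ Set.Ioc (0 : ℝ) 1) :
    5 / 4 * Real.exp (-√(2 * Real.log (1.25 / δ)) ^ 2 / 2) = δ := by
  have hδ0 : 0 < δ := hδ.1
  rw [Real.sq_sqrt (by linarith [one_fifth_le_log_div hδ]), neg_div,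
    mul_div_cancel_left₀ _ two_ne_zero, Real.exp_neg, Real.exp_log (by positivity), inv_div]
  ring

/-- The Gaussian mechanism: it releases `f D` with independent noise `N(0, σ²)` added to each
coordinate, encoded as the law of that output. -/
noncomputable def gaussianMechanism (f : 𝒟 → ι → ℝ) (σ : ℝ) (D : 𝒟) : Measure (ι → ℝ) :=
  Measure.pi fun i => gaussianReal (f D i) (σ ^ 2).toNNReal

theorem gaussian_mechanism_dp_general (Adj : 𝒟 → 𝒟 → Prop) (f : 𝒟 → ι → ℝ) {Δ : ℝ} (hΔ : 0 < Δ)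
    (hsens : ∀ D D', Adj D D' → √(∑ i, (f D i - f D' i) ^ 2) ≤ Δ) {ε δ σ : ℝ}
    (hε : ε ∈ Set.Ioc (0 : ℝ) (3 / 2)) (hδ : δ ∈ Set.Ioc (0 : ℝ) 1)
    (hσ : Δ * √(2 * Real.log (1.25 / δ)) / ε ≤ σ) :
    IsDifferentiallyPrivate Adj (gaussianMechanism f σ) ε δ := by
  intro D D' hadj
  have hε0 : 0 < ε := hε.1
  have hc := three_fifths_le_sqrt_two_mul_log_div hδ
  have hσ0 : 0 < σ :=
    (div_pos (mul_pos hΔ (lt_of_lt_of_le (by norm_num) hc)) hε0).trans_le hσ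
  have hloss : √(2 * Real.log (1.25 / δ)) *
      √(∑ i, (f D i - f D' i) ^ 2 / ((σ ^ 2).toNNReal : ℝ)) ≤ ε := by
    rw [Real.coe_toNNReal _ (sq_nonneg σ), ← Finset.sum_div, Real.sqrt_div' _ (sq_nonneg σ),
      Real.sqrt_sq hσ0.le, ← mul_div_assoc, div_le_iff₀ hσ0, mul_comm]
    rw [div_le_iff₀' hε0] at hσ
    exact (mul_le_mul_of_nonneg_right (hsens D D' hadj) (Real.sqrt_nonneg _)).trans hσ
  have hclose := approxIndistinguishable_pi_gaussianReal (f D) (f D')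
    (fun _ => (Real.toNNReal_pos.2 (sq_pos_of_pos hσ0)).ne') hc hε.2 hloss
  rwa [five_fourths_mul_exp_neg_sq_sqrt_two_mul_log_div hδ] at hclose

end GaussianMechanism

/-- Gaussian mechanism is `(ε, δ)`-differentially private.
Let `f : 𝒟 → ℝ^d` be a query with ℓ₂ global sensitivity at most `Δ` w.r.t. the
adjacency relation `Adj`, let `ε, δ ∈ (0,1)`, and set
`σ = Δ · √(2 log(1.25/δ)) / ε`.  The mechanism releasing `f(D) + N(0, σ²·I)`,
i.e. the product of Gaussians `⨂ᵢ N(f(D)ᵢ, σ²)`, satisfies `(ε, δ)`-DP. -/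
theorem gaussian_mechanism_dp {𝒟 : Type*} (Adj : 𝒟 → 𝒟 → Prop)
    (d : ℕ) (hd : 1 ≤ d) (f : 𝒟 → Fin d → ℝ) (Δ : ℝ) (hΔ : 0 < Δ)
    (hsens : ∀ D D', Adj D D' →
      Real.sqrt (∑ i : Fin d, (f D i - f D' i) ^ 2) ≤ Δ)
    (ε δ : ℝ) (hε : ε ∈ Set.Ioo (0 : ℝ) 1) (hδ : δ ∈ Set.Ioo (0 : ℝ) 1)
    (σ : ℝ) (hσ : σ = Δ * Real.sqrt (2 * Real.log (1.25 / δ)) / ε)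
    (M : 𝒟 → Measure (Fin d → ℝ))
    (hM : ∀ D, M D = Measure.pi (fun i => gaussianReal (f D i) (σ ^ 2).toNNReal)) :
    ∀ D D', Adj D D' → ∀ E : Set (Fin d → ℝ), MeasurableSet E →
      M D E ≤ ENNReal.ofReal (Real.exp ε) * M D' E + ENNReal.ofReal δ := by
  obtain rfl : M = gaussianMechanism f σ := funext hM
  exact gaussian_mechanism_dp_general Adj f hΔ hsens ⟨hε.1, by linarith [hε.2]⟩ ⟨hδ.1, hδ.2.le⟩
    hσ.ge
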